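/- The set M₂ is I-dense in M₃: for every (μ,Q) ∈ M₃ with I(μ,Q) < +∞ there exists a sequence {(μ_n,Q_n)} ⊂ M₂ such that (μ_n,Q_n) → (μ,Q) and I(μ_n,Q_n) → I(μ,Q). -/

import Mathlib

open MeasureTheory ProbabilityTheory Filter Topology Set ENNReal

noncomputable section

/-- The data of transition rates `c(x,dy) = r(x) p(x,y) λ(dy)` on a state space `E`,
satisfying Assumption 1.1 (i)-(iii): `r` is continuous and nonnegative, `λ` is a probability
measure which is strictly positive on open sets, `p` is a strictly positive continuous
transition density, and `1/r` is `λ`-integrable. -/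
structure ChainSetting (E : Type*) [MeasurableSpace E] [TopologicalSpace E] where
  r : E → ℝ
  r_cont : Continuous r
  r_nonneg : ∀ x, 0 ≤ r x
  lam : Measure E
  lam_prob : IsProbabilityMeasure lam
  lam_pos : ∀ U : Set E, IsOpen U → U.Nonempty → 0 < lam U
  p : E → E → ℝ
  p_cont : Continuous fun z : E × E => p z.1 z.2
  p_pos : ∀ x y, 0 < p x y
  p_int : ∀ x, ∫ y, p x y ∂lam = 1
  inv_r_int : ∫⁻ x, (ENNReal.ofReal (r x))⁻¹ ∂lam ≠ ∞

namespace ChainSetting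

variable {E : Type*} [MeasurableSpace E] [TopologicalSpace E] (S : ChainSetting E)

/-- The (closed) set `E₀ = {x : r(x) = 0}` of absorbing states. -/
def E0 : Set E := {x | S.r x = 0}

/-- The skeleton transition probability `p(x,dy) = p(x,y) λ(dy)`. -/
def skel (x : E) : Measure E := S.lam.withDensity fun y => ENNReal.ofReal (S.p x y)

/-- The jump rates `c(x,dy) = r(x) p(x,y) λ(dy)`. -/
def cMeas (x : E) : Measure E := S.lam.withDensity fun y => ENNReal.ofReal (S.r x * S.p x y)

/-- The measure `μ(dx) c(x,dy)` on `E × E`. -/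
def muc (μ : Measure E) : Measure (E × E) :=
  (μ.prod S.lam).withDensity fun z => ENNReal.ofReal (S.r z.1 * S.p z.1 z.2)

/-- The invariant probability `π(dx) = π₀(1/r)⁻¹ π₀(dx)/r(x)` of the continuous-time chain,
built from the invariant probability `π₀` of the skeleton, cf. (1.2). -/
def piMeas (π₀ : Measure E) : Measure E :=
  (∫⁻ x, (ENNReal.ofReal (S.r x))⁻¹ ∂π₀)⁻¹ •
    π₀.withDensity fun x => (ENNReal.ofReal (S.r x))⁻¹

/-- Assumption 1.1 (iv): with `A_δ = {r < δ}`, there is a sequence `δ_n → 0` with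
`λ(A_{2δ_n}) ≤ C λ(A_{2δ_n} \ A_{δ_n})`. -/
def CondIV : Prop :=
  ∃ δ : ℕ → ℝ, (∀ n, 0 < δ n) ∧ Tendsto δ atTop (𝓝 0) ∧
    ∃ C : ℝ≥0∞, C ≠ ∞ ∧ ∀ n,
      S.lam {x | S.r x < 2 * δ n} ≤ C * S.lam ({x | S.r x < 2 * δ n} \ {x | S.r x < δ n})

end ChainSetting

/-- The convex function `Ψ(a) = a log a - (a - 1)` (with `Ψ(0) = 1`), extended to `ℝ≥0∞`. -/
def PsiE (a : ℝ≥0∞) : ℝ≥0∞ :=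
  if a = ∞ then ∞ else ENNReal.ofReal (a.toReal * Real.log a.toReal - a.toReal + 1)

open Classical in
/-- The joint rate functional `I(μ,Q)` of (2.3):
`I(μ,Q) = ∫∫ μ(dx)c(x,dy) Ψ(dQ/(μ(dx)c(x,dy)))` if the two marginals of `Q` coincide and
`Q ≪ μ(dx)c(x,dy)`, and `+∞` otherwise. -/
def ChainSetting.rateI0 {E : Type*} [MeasurableSpace E] [TopologicalSpace E]
    (S : ChainSetting E) (μ : Measure E) (Q : Measure (E × E)) : ℝ≥0∞ :=
  if Q.fst = Q.snd ∧ Q ≪ S.muc μ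
  then ∫⁻ z, PsiE (Q.rnDeriv (S.muc μ) z) ∂(S.muc μ)
  else ∞

/-- The joint rate functional `I` on `M₁(E) × M₊(E×E)`. -/
def ChainSetting.rateI {E : Type*} [MeasurableSpace E] [TopologicalSpace E]
    (S : ChainSetting E) (q : ProbabilityMeasure E × FiniteMeasure (E × E)) : ℝ≥0∞ :=
  S.rateI0 (q.1 : Measure E) (q.2 : Measure (E × E))

/-- The (topological) support of a measure: points all of whose open neighbourhoods have
positive measure. -/
def msupp {α : Type*} [TopologicalSpace α] {m : MeasurableSpace α} (μ : Measure α) : Set α :=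
  {x | ∀ U : Set α, IsOpen U → x ∈ U → 0 < μ U}

open Classical in
/-- Bundle a measure as a probability measure (junk value if it is not one). -/
def toPM {α : Type*} [MeasurableSpace α] [Nonempty α] (μ : Measure α) : ProbabilityMeasure α :=
  if h : IsProbabilityMeasure μ then ⟨μ, h⟩
  else ⟨Measure.dirac (Classical.arbitrary α), by infer_instance⟩

open Classical in
/-- Bundle a measure as a finite measure (junk value if it is not one). -/
def toFM {α : Type*} [MeasurableSpace α] (μ : Measure α) : FiniteMeasure α :=
  if h : IsFiniteMeasure μ then ⟨μ, h⟩ else 0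

/-- Membership in the set `M₂` of (5.8): `K = supp μ ⊆ E \\ E₀`, `supp Q = K × K`,
`μ ≪ λ` and `Q ≪ λ×λ`. -/
def ChainSetting.MemM2 {E : Type*} [MeasurableSpace E] [TopologicalSpace E]
    (S : ChainSetting E) (μ : Measure E) (Q : Measure (E × E)) : Prop :=
  msupp μ ⊆ S.E0ᶜ ∧ msupp Q = msupp μ ×ˢ msupp μ ∧
  μ ≪ S.lam ∧ Q ≪ S.lam.prod S.lam

/-- Membership in the set `M₃` of (5.9): `μ ≪ λ` and `Q ≪ λ×λ`. -/
def ChainSetting.MemM3 {E : Type*} [MeasurableSpace E] [TopologicalSpace E]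
    (S : ChainSetting E) (μ : Measure E) (Q : Measure (E × E)) : Prop :=
  μ ≪ S.lam ∧ Q ≪ S.lam.prod S.lam

variable {E : Type*} [MeasurableSpace E] [TopologicalSpace E] [PolishSpace E]
  [CompactSpace E] [BorelSpace E] [Nonempty E]

/-!
For a pair with equal marginals, `I(μ, Q)` is the relative entropy of `Q` with respect to
`μ(dx)c(x,dy)`, so it is jointly convex and obeys the data processing inequality. First mix
`(μ, Q)` with a small multiple of the pair formed by `π = λ(1/r)⁻¹ λ/r` and `λ(1/r)⁻¹ λ ⊗ λ`, which
has finite rate and full support: by convexity this costs little. Then resample the points of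
`A_{2δ}` from `λ` conditioned on `A_{2δ} \ A_δ`, independently at both ends of a jump: the supports
leave `A_δ`, and the entropy does not increase if the same kernel acts on both measures. The kernel
does not map `μ(dx)c(x,dy)` to the corresponding measure for the new `μ`, but by condition (iv) it
maps it to at most a constant multiple of that measure, with equality off `A_{2δ}`. The resulting
error is at most a constant times the mass of `A_{2δ}`, which vanishes as `δ → 0`. Fatou's lemma
gives the matching lower bound.
-/

open InformationTheory
open scoped NNReal

section KLDivergence

variable {X : Type*} [MeasurableSpace X]

lemma rnDeriv_restrict_restrict {μ ν : Measure X} [IsFiniteMeasure μ] [IsFiniteMeasure ν]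
    (hμν : μ ≪ ν) {s : Set X} (hs : MeasurableSet s) :
    (μ.restrict s).rnDeriv (ν.restrict s) =ᵐ[ν.restrict s] μ.rnDeriv ν := by
  conv_lhs => rw [← Measure.withDensity_rnDeriv_eq μ ν hμν, restrict_withDensity hs]
  exact Measure.rnDeriv_withDensity _ (Measure.measurable_rnDeriv μ ν)

lemma klDiv_eq_restrict_add_restrict_compl (μ ν : Measure X) [IsFiniteMeasure μ]
    [IsFiniteMeasure ν] {s : Set X} (hs : MeasurableSet s) :
    klDiv μ ν =
      klDiv (μ.restrict s) (ν.restrict s) + klDiv (μ.restrict sᶜ) (ν.restrict sᶜ) := by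
  by_cases hμν : μ ≪ ν
  · have klDiv_restrict {t : Set X} (ht : MeasurableSet t) :
        klDiv (μ.restrict t) (ν.restrict t) =
          ∫⁻ x in t, ENNReal.ofReal (klFun (μ.rnDeriv ν x).toReal) ∂ν := by
      rw [klDiv_eq_lintegral_klFun_of_ac (hμν.restrict t)]
      refine lintegral_congr_ae ?_
      filter_upwards [rnDeriv_restrict_restrict hμν ht] with x hx
      rw [hx]
    rw [klDiv_restrict hs, klDiv_restrict hs.compl, lintegral_add_compl _ hs,
      klDiv_eq_lintegral_klFun_of_ac hμν]
  · rw [klDiv_of_not_ac hμν]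
    by_contra! h
    have hac {t : Set X} (ht : klDiv (μ.restrict t) (ν.restrict t) ≠ ∞) :
        μ.restrict t ≪ ν.restrict t := (klDiv_ne_top_iff.mp ht).1
    obtain ⟨hs_ne, hsc_ne⟩ := ENNReal.add_ne_top.mp h.symm
    refine hμν ?_
    rw [← Measure.restrict_add_restrict_compl (μ := μ) hs,
      ← Measure.restrict_add_restrict_compl (μ := ν) hs]
    exact (hac hs_ne).add (hac hsc_ne)

lemma restrict_range_inl_map_inl_add_map_inr {Y : Type*} [MeasurableSpace Y]
    (μ : Measure X) (ν : Measure Y) :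
    (μ.map Sum.inl + ν.map Sum.inr).restrict (range (Sum.inl : X → X ⊕ Y)) = μ.map Sum.inl := by
  rw [Measure.restrict_add,
    Measure.restrict_eq_self_of_ae_mem (ae_map_mem_range _ measurableSet_range_inl μ),
    Measure.restrict_eq_zero.mpr, add_zero]
  rw [Measure.map_apply measurable_inr measurableSet_range_inl, preimage_inr_range_inl,
    measure_empty]

lemma restrict_compl_range_inl_map_inl_add_map_inr {Y : Type*} [MeasurableSpace Y]
    (μ : Measure X) (ν : Measure Y) :
    (μ.map Sum.inl + ν.map Sum.inr).restrict (range (Sum.inl : X → X ⊕ Y))ᶜ = ν.map Sum.inr := by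
  rw [Measure.restrict_add, compl_range_inl,
    Measure.restrict_eq_self_of_ae_mem (ae_map_mem_range _ measurableSet_range_inr ν),
    Measure.restrict_eq_zero.mpr, zero_add]
  rw [Measure.map_apply measurable_inl measurableSet_range_inr, preimage_inl_range_inr,
    measure_empty]

/- Data processing for the map which glues two disjoint copies of `X`; on the disjoint copies the
divergence is additive. -/
lemma klDiv_add_le (μ μ' ν ν' : Measure X) [IsFiniteMeasure μ] [IsFiniteMeasure μ']
    [IsFiniteMeasure ν] [IsFiniteMeasure ν'] :
    klDiv (μ + μ') (ν + ν') ≤ klDiv μ ν + klDiv μ' ν' := by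
  have map_glue (ρ ρ' : Measure X) :
      (ρ.map Sum.inl + ρ'.map Sum.inr).map (Sum.elim id id) = ρ + ρ' := by
    have h : Measurable (Sum.elim id id : X ⊕ X → X) := measurable_id.sumElim measurable_id
    rw [Measure.map_add _ _ h, Measure.map_map h measurable_inl,
      Measure.map_map h measurable_inr, Sum.elim_comp_inl, Sum.elim_comp_inr, Measure.map_id,
      Measure.map_id]
  calc klDiv (μ + μ') (ν + ν')
      = klDiv ((μ.map Sum.inl + μ'.map Sum.inr).map (Sum.elim id id))
          ((ν.map Sum.inl + ν'.map Sum.inr).map (Sum.elim id id)) := by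
        rw [map_glue, map_glue]
    _ ≤ klDiv (μ.map Sum.inl + μ'.map Sum.inr) (ν.map Sum.inl + ν'.map Sum.inr) :=
        klDiv_map_le _ _ (measurable_id.sumElim measurable_id)
    _ = klDiv (μ.map Sum.inl) (ν.map Sum.inl) + klDiv (μ'.map Sum.inr) (ν'.map Sum.inr) := by
        rw [klDiv_eq_restrict_add_restrict_compl _ _ measurableSet_range_inl,
          restrict_range_inl_map_inl_add_map_inr, restrict_range_inl_map_inl_add_map_inr,
          restrict_compl_range_inl_map_inl_add_map_inr,
          restrict_compl_range_inl_map_inl_add_map_inr]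
    _ ≤ klDiv μ ν + klDiv μ' ν' :=
        add_le_add (klDiv_map_le _ _ measurable_inl) (klDiv_map_le _ _ measurable_inr)

lemma klDiv_smul_right_le (μ ν : Measure X) [IsFiniteMeasure μ] [IsFiniteMeasure ν] {c : ℝ≥0}
    (hc : c ≠ 0) (hc1 : c ≤ 1) :
    klDiv μ (c • ν) ≤ klDiv μ ν + ENNReal.ofReal (-Real.log c) * μ univ := by
  by_cases h : klDiv μ ν = ∞
  · simp [h]
  obtain ⟨hμν, h_int⟩ := klDiv_ne_top_iff.mp h
  have hlog : 0 ≤ -Real.log c := neg_nonneg.mpr (Real.log_nonpos c.2 (by exact_mod_cast hc1))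
  have h_int' : Integrable (llr μ (c • ν)) μ := by
    rw [integrable_congr (llr_smul_nnreal_right hμν c hc)]
    fun_prop
  have hμcν : μ ≪ c • ν := hμν.smul_right (c := (c : ℝ≥0∞)) (by simpa)
  rw [← ENNReal.ofReal_toReal (klDiv_ne_top hμcν h_int'), ← ENNReal.ofReal_toReal h,
    ← ofReal_measureReal, ← ENNReal.ofReal_mul hlog,
    ← ENNReal.ofReal_add toReal_nonneg (by positivity), toReal_klDiv_smul_right hμν h_int hc]
  refine ENNReal.ofReal_le_ofReal ?_
  have : ((c : ℝ) - 1) * ν.real univ ≤ 0 :=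
    mul_nonpos_of_nonpos_of_nonneg (by simpa using hc1) measureReal_nonneg
  linarith

lemma klDiv_le_of_le_smul (μ : Measure X) {ν ν' : Measure X} [IsFiniteMeasure μ]
    [IsFiniteMeasure ν] [IsFiniteMeasure ν'] {K : ℝ≥0} (hK : 1 ≤ K) (h : ν ≤ K • ν') :
    klDiv μ ν' ≤ klDiv μ ν + (ENNReal.ofReal (Real.log K) * μ univ + ν' univ) := by
  have hK0 : K ≠ 0 := (zero_lt_one.trans_le hK).ne'
  have hle : K⁻¹ • ν ≤ ν' :=
    calc K⁻¹ • ν ≤ K⁻¹ • K • ν' := by gcongr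
      _ = ν' := by rw [smul_smul, inv_mul_cancel₀ hK0, one_smul]
  calc klDiv μ ν' = klDiv (μ + 0) (K⁻¹ • ν + (ν' - K⁻¹ • ν)) := by
        rw [add_zero, add_comm (K⁻¹ • ν), Measure.sub_add_cancel_of_le hle]
    _ ≤ klDiv μ (K⁻¹ • ν) + klDiv 0 (ν' - K⁻¹ • ν) := klDiv_add_le _ _ _ _
    _ ≤ klDiv μ ν + ENNReal.ofReal (Real.log K) * μ univ + ν' univ := by
        refine add_le_add ?_ (klDiv_zero_left.trans_le (Measure.sub_le _))
        simpa using klDiv_smul_right_le μ ν (inv_ne_zero hK0) (inv_le_one_of_one_le₀ hK)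
    _ = _ := add_assoc _ _ _

lemma klDiv_le_of_le_smul_of_restrict_eq (μ : Measure X) {ν ν' : Measure X} [IsFiniteMeasure μ]
    [IsFiniteMeasure ν] [IsFiniteMeasure ν'] {K : ℝ≥0} (hK : 1 ≤ K) (h : ν ≤ K • ν')
    {G : Set X} (hG : MeasurableSet G) (hνν' : ν.restrict G = ν'.restrict G) :
    klDiv μ ν' ≤ klDiv μ ν + (ENNReal.ofReal (Real.log K) * μ Gᶜ + ν' Gᶜ) := by
  have hGc : ν.restrict Gᶜ ≤ K • ν'.restrict Gᶜ :=
    (Measure.restrict_mono_measure h _).trans_eq (Measure.restrict_smul K ν' _)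
  rw [klDiv_eq_restrict_add_restrict_compl μ ν' hG, klDiv_eq_restrict_add_restrict_compl μ ν hG,
    add_assoc, hνν']
  gcongr
  simpa using klDiv_le_of_le_smul (μ.restrict Gᶜ) hK hGc

lemma klDiv_eq_lintegral_rnDeriv {μ ν : Measure X} (ξ : Measure X) [IsFiniteMeasure μ]
    [IsFiniteMeasure ν] [SigmaFinite ξ] (hμν : μ ≪ ν) (hν : ν ≪ ξ) :
    klDiv μ ν = ∫⁻ x, ν.rnDeriv ξ x *
      ENNReal.ofReal (klFun (μ.rnDeriv ξ x / ν.rnDeriv ξ x).toReal) ∂ξ := by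
  rw [klDiv_eq_lintegral_klFun_of_ac hμν, lintegral_rnDeriv_mul hν (by fun_prop)]
  refine lintegral_congr_ae ?_
  filter_upwards [Measure.rnDeriv_eq_div (hμν.trans hν) hν] with x hx
  rw [hx]

lemma klDiv_le_liminf_of_tendsto_rnDeriv {μ ν ξ : Measure X} [IsFiniteMeasure μ]
    [IsFiniteMeasure ν] [SigmaFinite ξ] (hμν : μ ≪ ν) (hν : ν ≪ ξ) {μs νs : ℕ → Measure X}
    [∀ n, IsFiniteMeasure (μs n)] [∀ n, IsFiniteMeasure (νs n)] (hνs : ∀ n, νs n ≪ ξ)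
    (hμ_lim : ∀ᵐ x ∂ξ, Tendsto (fun n => (μs n).rnDeriv ξ x) atTop (𝓝 (μ.rnDeriv ξ x)))
    (hν_lim : ∀ᵐ x ∂ξ, Tendsto (fun n => (νs n).rnDeriv ξ x) atTop (𝓝 (ν.rnDeriv ξ x))) :
    klDiv μ ν ≤ liminf (fun n => klDiv (μs n) (νs n)) atTop := by
  set Φ : ℝ≥0∞ → ℝ≥0∞ → ℝ≥0∞ := fun a b => b * ENNReal.ofReal (klFun (a / b).toReal)
  have le_klDiv (n : ℕ) :
      ∫⁻ x, Φ ((μs n).rnDeriv ξ x) ((νs n).rnDeriv ξ x) ∂ξ ≤ klDiv (μs n) (νs n) := by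
    by_cases hn : μs n ≪ νs n
    · exact (klDiv_eq_lintegral_rnDeriv ξ hn (hνs n)).ge
    · simp [klDiv_of_not_ac hn]
  have Φ_le_liminf : ∀ᵐ x ∂ξ, Φ (μ.rnDeriv ξ x) (ν.rnDeriv ξ x) ≤
      liminf (fun n => Φ ((μs n).rnDeriv ξ x) ((νs n).rnDeriv ξ x)) atTop := by
    filter_upwards [hμ_lim, hν_lim, μ.rnDeriv_lt_top ξ, ν.rnDeriv_lt_top ξ] with x hμx hνx hμ_top
      hν_top
    by_cases h0 : ν.rnDeriv ξ x = 0
    · simp [Φ, h0]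
    have hdiv := (ENNReal.tendsto_toReal (ENNReal.div_ne_top hμ_top.ne h0)).comp
      (ENNReal.Tendsto.div hμx (.inr h0) hνx (.inr hμ_top.ne))
    exact (ENNReal.Tendsto.mul hνx (.inl h0)
      (ENNReal.tendsto_ofReal ((continuous_klFun.tendsto _).comp hdiv))
      (.inr hν_top.ne)).liminf_eq.ge
  calc klDiv μ ν = ∫⁻ x, Φ (μ.rnDeriv ξ x) (ν.rnDeriv ξ x) ∂ξ :=
        klDiv_eq_lintegral_rnDeriv ξ hμν hν
    _ ≤ ∫⁻ x, liminf (fun n => Φ ((μs n).rnDeriv ξ x) ((νs n).rnDeriv ξ x)) atTop ∂ξ :=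
        lintegral_mono_ae Φ_le_liminf
    _ ≤ liminf (fun n => ∫⁻ x, Φ ((μs n).rnDeriv ξ x) ((νs n).rnDeriv ξ x) ∂ξ) atTop :=
        lintegral_liminf_le fun n => by fun_prop
    _ ≤ liminf (fun n => klDiv (μs n) (νs n)) atTop := liminf_le_liminf (.of_forall le_klDiv)

end KLDivergence

section Kernels

variable {X : Type*} [MeasurableSpace X]

/-- The kernel `η` leaves the points of `G` where they are and never moves a point from outside
`G` into `G`, so that it does not change the restriction of a measure to `G`. -/
structure FixesOn (η : Kernel X X) (G : Set X) : Prop where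
  eq_dirac : ∀ x ∈ G, η x = Measure.dirac x
  apply_eq_zero : ∀ x ∉ G, η x G = 0

namespace FixesOn

variable {η : Kernel X X} {G : Set X}

lemma restrict_comp (h : FixesOn η G) (hG : MeasurableSet G) (μ : Measure X) :
    (η ∘ₘ μ).restrict G = μ.restrict G := by
  ext s hs
  rw [Measure.restrict_apply hs, Measure.restrict_apply hs,
    Measure.bind_apply (hs.inter hG) η.aemeasurable, ← lintegral_indicator_one (hs.inter hG)]
  refine lintegral_congr fun x => ?_
  by_cases hx : x ∈ G
  · rw [h.eq_dirac x hx, Measure.dirac_apply' x (hs.inter hG)]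
  · rw [measure_mono_null inter_subset_right (h.apply_eq_zero x hx),
      indicator_of_notMem fun hx' => hx hx'.2]

lemma comp_apply_compl [IsMarkovKernel η] (h : FixesOn η G) (hG : MeasurableSet G)
    (μ : Measure X) [IsFiniteMeasure μ] : (η ∘ₘ μ) Gᶜ = μ Gᶜ := by
  have hG_eq : (η ∘ₘ μ) G = μ G := by
    simpa using congrArg (fun ν : Measure X => ν univ) (h.restrict_comp hG μ)
  rw [measure_compl hG (measure_ne_top _ _), measure_compl hG (measure_ne_top _ _), hG_eq,
    Measure.comp_apply_univ]

lemma parallelComp {Y : Type*} [MeasurableSpace Y] {κ : Kernel Y Y} {H : Set Y}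
    [IsMarkovKernel η] [IsMarkovKernel κ] (hη : FixesOn η G) (hκ : FixesOn κ H) :
    FixesOn (η ∥ₖ κ) (G ×ˢ H) where
  eq_dirac z hz := by
    rw [Kernel.parallelComp_apply, hη.eq_dirac _ hz.1, hκ.eq_dirac _ hz.2,
      Measure.dirac_prod_dirac]
  apply_eq_zero z hz := by
    rw [Kernel.parallelComp_apply, Measure.prod_prod, mul_eq_zero]
    rcases not_and_or.mp hz with hz | hz
    · exact .inl (hη.apply_eq_zero _ hz)
    · exact .inr (hκ.apply_eq_zero _ hz)

end FixesOn

open Classical in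
/-- The kernel which resamples the points of `A` from `ν` and leaves all other points where they
are. -/
def collapse {A : Set X} (hA : MeasurableSet A) (ν : Measure X) : Kernel X X :=
  Kernel.piecewise hA (Kernel.const X ν) Kernel.id

section Collapse

variable {A : Set X} (hA : MeasurableSet A) {ν : Measure X}

lemma collapse_apply_of_mem {x : X} (hx : x ∈ A) : collapse hA ν x = ν := by
  classical rw [collapse, Kernel.piecewise_apply, if_pos hx, Kernel.const_apply]

lemma collapse_apply_of_notMem {x : X} (hx : x ∉ A) :
    collapse hA ν x = Measure.dirac x := by
  classical rw [collapse, Kernel.piecewise_apply, if_neg hx, Kernel.id_apply]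

lemma isMarkovKernel_collapse (hν : A.Nonempty → IsProbabilityMeasure ν) :
    IsMarkovKernel (collapse hA ν) := by
  refine ⟨fun x => ?_⟩
  by_cases hx : x ∈ A
  · rw [collapse_apply_of_mem hA hx]
    exact hν ⟨x, hx⟩
  · rw [collapse_apply_of_notMem hA hx]
    infer_instance

lemma fixesOn_collapse (hν : ν Aᶜ = 0) : FixesOn (collapse hA ν) Aᶜ where
  eq_dirac _ hx := collapse_apply_of_notMem hA hx
  apply_eq_zero x hx := by rwa [collapse_apply_of_mem hA (not_notMem.mp hx)]

variable (ν) in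
lemma collapse_comp (μ : Measure X) : collapse hA ν ∘ₘ μ = μ A • ν + μ.restrict Aᶜ := by
  ext s hs
  rw [Measure.bind_apply hs (Kernel.aemeasurable _), ← lintegral_add_compl _ hA,
    setLIntegral_congr_fun hA fun x hx => by rw [collapse_apply_of_mem hA hx],
    setLIntegral_congr_fun hA.compl fun x hx => by
      rw [collapse_apply_of_notMem hA hx, Measure.dirac_apply' x hs],
    setLIntegral_const, lintegral_indicator_one hs, mul_comm]
  simp

end Collapse

lemma comp_withDensity_le (η : Kernel X X) (μ : Measure X) {w : X → ℝ≥0∞} (hw : Measurable w)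
    {K : ℝ≥0} (h : ∀ x, ∀ᵐ y ∂η x, w x ≤ K * w y) :
    η ∘ₘ μ.withDensity w ≤ K • (η ∘ₘ μ).withDensity w := by
  refine Measure.le_iff.mpr fun s hs => ?_
  have hsw : Measurable (s.indicator w) := hw.indicator hs
  have mul_apply_le (x : X) : w x * η x s ≤ K * ∫⁻ y, s.indicator w y ∂η x := by
    rw [lintegral_indicator hs, ← lintegral_const_mul _ hw, ← setLIntegral_const]
    exact lintegral_mono_ae (ae_restrict_of_ae (h x))
  calc (η ∘ₘ μ.withDensity w) s
      = ∫⁻ x, w x * η x s ∂μ := by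
        rw [Measure.bind_apply hs η.aemeasurable,
          lintegral_withDensity_eq_lintegral_mul _ hw (η.measurable_coe hs)]
        rfl
    _ ≤ ∫⁻ x, K * ∫⁻ y, s.indicator w y ∂η x ∂μ := lintegral_mono mul_apply_le
    _ = K * ∫⁻ y, s.indicator w y ∂(η ∘ₘ μ) := by
        rw [lintegral_const_mul _ hsw.lintegral_kernel,
          Measure.lintegral_bind η.aemeasurable hsw.aemeasurable]
    _ = (K • (η ∘ₘ μ).withDensity w) s := by
        rw [lintegral_indicator hs, Measure.smul_apply, withDensity_apply _ hs,
          ENNReal.smul_def, smul_eq_mul]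

lemma parallelComp_comp_prod {Y : Type*} [MeasurableSpace Y] (η : Kernel X X) (κ : Kernel Y Y)
    [IsSFiniteKernel η] [IsSFiniteKernel κ] (μ : Measure X) (ν : Measure Y) [SFinite μ]
    [SFinite ν] : (η ∥ₖ κ) ∘ₘ (μ.prod ν) = (η ∘ₘ μ).prod (κ ∘ₘ ν) := by
  rw [Measure.prod_comp_left, Measure.prod_comp_right, Measure.comp_assoc,
    Kernel.parallelComp_id_right_comp_parallelComp, Kernel.comp_id]

lemma fst_parallelComp_comp {Y : Type*} [MeasurableSpace Y] (η : Kernel X X) (κ : Kernel Y Y)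
    [IsSFiniteKernel η] [IsMarkovKernel κ] (μ : Measure (X × Y)) :
    ((η ∥ₖ κ) ∘ₘ μ).fst = η ∘ₘ μ.fst := by
  ext s hs
  rw [Measure.fst_apply hs, Measure.bind_apply (measurable_fst hs) (Kernel.aemeasurable _),
    Measure.bind_apply hs η.aemeasurable, Measure.fst,
    lintegral_map (η.measurable_coe hs) measurable_fst]
  simp [← prod_univ, Kernel.parallelComp_apply_prod]

lemma snd_parallelComp_comp {Y : Type*} [MeasurableSpace Y] (η : Kernel X X) (κ : Kernel Y Y)
    [IsMarkovKernel η] [IsSFiniteKernel κ] (μ : Measure (X × Y)) :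
    ((η ∥ₖ κ) ∘ₘ μ).snd = κ ∘ₘ μ.snd := by
  ext s hs
  rw [Measure.snd_apply hs, Measure.bind_apply (measurable_snd hs) (Kernel.aemeasurable _),
    Measure.bind_apply hs κ.aemeasurable, Measure.snd,
    lintegral_map (κ.measurable_coe hs) measurable_snd]
  simp [← univ_prod, Kernel.parallelComp_apply_prod]

lemma tendsto_lintegral_comp {η : ℕ → Kernel X X} [∀ n, IsMarkovKernel (η n)] {μ : Measure X}
    [IsFiniteMeasure μ] (h : ∀ᵐ x ∂μ, ∀ᶠ n in atTop, η n x = Measure.dirac x) {f : X → ℝ≥0∞}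
    (hf : Measurable f) {C : ℝ≥0} (hC : ∀ x, f x ≤ C) :
    Tendsto (fun n => ∫⁻ x, f x ∂(η n ∘ₘ μ)) atTop (𝓝 (∫⁻ x, f x ∂μ)) := by
  simp_rw [fun n => Measure.lintegral_bind (m := μ) (η n).aemeasurable hf.aemeasurable]
  refine tendsto_lintegral_of_dominated_convergence (fun _ => C)
    (fun n => hf.lintegral_kernel) (fun n => .of_forall fun x => ?_)
    (by simp [ENNReal.mul_eq_top]) ?_
  · exact (lintegral_mono hC).trans (by simp)
  · filter_upwards [h] with x hx
    refine tendsto_const_nhds.congr' ?_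
    filter_upwards [hx] with n hn
    rw [hn, lintegral_dirac' x hf]

end Kernels

section Mixtures

variable {X : Type*} [MeasurableSpace X]

/-- The mixture `(1 - t) μ + t ν` of two measures. It is a convex combination only for `t ≤ 1`,
since the subtraction is truncated. -/
def mixture (t : ℝ≥0) (μ ν : Measure X) : Measure X := (1 - t) • μ + t • ν

variable {t : ℝ≥0} {μ ν : Measure X}

instance [IsFiniteMeasure μ] [IsFiniteMeasure ν] : IsFiniteMeasure (mixture t μ ν) := by
  unfold mixture; infer_instance

lemma isProbabilityMeasure_mixture [IsProbabilityMeasure μ] [IsProbabilityMeasure ν]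
    (ht : t ≤ 1) : IsProbabilityMeasure (mixture t μ ν) := by
  refine ⟨?_⟩
  simp only [mixture, Measure.add_apply, Measure.smul_apply, measure_univ, ENNReal.smul_def,
    smul_eq_mul, mul_one]
  exact_mod_cast tsub_add_cancel_of_le ht

lemma mixture_le_add (ht : t ≤ 1) : mixture t μ ν ≤ μ + ν := by
  refine Measure.le_iff.mpr fun s _ => ?_
  exact add_le_add (mul_le_of_le_one_left' (by simp)) (mul_le_of_le_one_left' (by simpa))

lemma mixture_absolutelyContinuous {ξ : Measure X} (hμ : μ ≪ ξ) (hν : ν ≪ ξ) :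
    mixture t μ ν ≪ ξ :=
  (hμ.smul_left (1 - t)).add_left (hν.smul_left t)

lemma absolutelyContinuous_mixture (ht : t ≠ 0) (μ ν : Measure X) : ν ≪ mixture t μ ν := by
  have hν : ν ≪ t • ν := Measure.absolutelyContinuous_smul (by simpa : (t : ℝ≥0∞) ≠ 0)
  exact hν.trans <| Measure.absolutelyContinuous_of_le (Measure.le_add_left le_rfl)

lemma map_mixture {Y : Type*} [MeasurableSpace Y] {f : X → Y} (hf : Measurable f) :
    (mixture t μ ν).map f = mixture t (μ.map f) (ν.map f) := by
  rw [mixture, Measure.map_add _ _ hf, Measure.map_smul, Measure.map_smul, mixture]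

lemma klDiv_mixture_le (t : ℝ≥0) (μ μ' ν ν' : Measure X) [IsFiniteMeasure μ] [IsFiniteMeasure μ']
    [IsFiniteMeasure ν] [IsFiniteMeasure ν'] :
    klDiv (mixture t μ μ') (mixture t ν ν') ≤ (1 - t : ℝ≥0) * klDiv μ ν + t * klDiv μ' ν' := by
  rw [← klDiv_smul_same, ← klDiv_smul_same]
  exact klDiv_add_le _ _ _ _

lemma rnDeriv_mixture (t : ℝ≥0) (μ ν ξ : Measure X) [SigmaFinite μ] [SigmaFinite ν]
    [SigmaFinite ξ] : (mixture t μ ν).rnDeriv ξ =ᵐ[ξ]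
      fun x => (1 - t : ℝ≥0) * μ.rnDeriv ξ x + t * ν.rnDeriv ξ x := by
  filter_upwards [Measure.rnDeriv_add' ((1 - t) • μ) (t • ν) ξ,
    Measure.rnDeriv_smul_left' μ ξ (1 - t), Measure.rnDeriv_smul_left' ν ξ t] with x hx hμ hν
  rw [mixture, hx, Pi.add_apply, hμ, hν]
  rfl

lemma lintegral_mixture (f : X → ℝ≥0∞) :
    ∫⁻ x, f x ∂(mixture t μ ν) = (1 - t : ℝ≥0) * ∫⁻ x, f x ∂μ + t * ∫⁻ x, f x ∂ν := by
  rw [mixture, lintegral_add_measure, lintegral_smul_measure, lintegral_smul_measure]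
  rfl

lemma comp_mixture (η : Kernel X X) : η ∘ₘ mixture t μ ν = mixture t (η ∘ₘ μ) (η ∘ₘ ν) := by
  rw [mixture, Measure.comp_add, Measure.bind_smul, Measure.bind_smul, mixture]

variable {ε : ℕ → ℝ≥0}

lemma tendsto_one_sub_mul_add_mul (hε : Tendsto ε atTop (𝓝 0)) {u v : ℕ → ℝ≥0∞} {a b : ℝ≥0∞}
    (hu : Tendsto u atTop (𝓝 a)) (hv : Tendsto v atTop (𝓝 b)) (hb : b ≠ ∞) :
    Tendsto (fun n => (1 - ε n : ℝ≥0) * u n + ε n * v n) atTop (𝓝 a) := by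
  have h1 : Tendsto (fun n => ((1 - ε n : ℝ≥0) : ℝ≥0∞)) atTop (𝓝 1) := by
    rw [← ENNReal.coe_one, ENNReal.tendsto_coe]
    simpa using tendsto_const_nhds.sub hε
  have h0 : Tendsto (fun n => (ε n : ℝ≥0∞)) atTop (𝓝 0) := by
    simpa using ENNReal.tendsto_coe.mpr hε
  simpa using (ENNReal.Tendsto.mul h1 (.inl one_ne_zero) hu (.inr one_ne_top)).add
    (ENNReal.Tendsto.mul h0 (.inr hb) hv (.inr zero_ne_top))

lemma tendsto_lintegral_comp_mixture (hε : Tendsto ε atTop (𝓝 0)) {η : ℕ → Kernel X X}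
    [∀ n, IsMarkovKernel (η n)] {ξ : Measure X}
    (hη : ∀ᵐ x ∂ξ, ∀ᶠ n in atTop, η n x = Measure.dirac x) [IsFiniteMeasure μ] [IsFiniteMeasure ν]
    (hμ : μ ≪ ξ) (hν : ν ≪ ξ) {f : X → ℝ≥0∞} (hf : Measurable f) {C : ℝ≥0} (hC : ∀ x, f x ≤ C) :
    Tendsto (fun n => ∫⁻ x, f x ∂(η n ∘ₘ mixture (ε n) μ ν)) atTop (𝓝 (∫⁻ x, f x ∂μ)) := by
  simp_rw [comp_mixture, lintegral_mixture]
  exact tendsto_one_sub_mul_add_mul hε (tendsto_lintegral_comp (hμ.ae_le hη) hf hC)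
    (tendsto_lintegral_comp (hν.ae_le hη) hf hC)
    ((lintegral_mono hC).trans_lt (by simp [ENNReal.mul_lt_top])).ne

lemma ae_tendsto_rnDeriv_of_restrict_eq_mixture (hε : Tendsto ε atTop (𝓝 0)) {ξ : Measure X}
    [SigmaFinite ξ] [IsFiniteMeasure μ] [IsFiniteMeasure ν] {νs : ℕ → Measure X}
    [∀ n, SigmaFinite (νs n)] {G : ℕ → Set X} (hG : ∀ n, MeasurableSet (G n))
    (hG_ev : ∀ᵐ x ∂ξ, ∀ᶠ n in atTop, x ∈ G n)
    (h : ∀ n, (νs n).restrict (G n) = (mixture (ε n) μ ν).restrict (G n)) :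
    ∀ᵐ x ∂ξ, Tendsto (fun n => (νs n).rnDeriv ξ x) atTop (𝓝 (μ.rnDeriv ξ x)) := by
  have rnDeriv_eq (n : ℕ) : ∀ᵐ x ∂ξ, x ∈ G n →
      (νs n).rnDeriv ξ x = (1 - ε n : ℝ≥0) * μ.rnDeriv ξ x + ε n * ν.rnDeriv ξ x := by
    have hn := Measure.rnDeriv_restrict (νs n) ξ (hG n)
    rw [h n] at hn
    filter_upwards [hn, Measure.rnDeriv_restrict (mixture (ε n) μ ν) ξ (hG n),
      rnDeriv_mixture (ε n) μ ν ξ] with x hx hx' hmix hxG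
    rw [← hmix]
    simpa [hxG] using hx.symm.trans hx'
  filter_upwards [ae_all_iff.mpr rnDeriv_eq, hG_ev, ν.rnDeriv_lt_top ξ] with x hx hxG hν
  refine (tendsto_one_sub_mul_add_mul hε tendsto_const_nhds tendsto_const_nhds hν.ne).congr' ?_
  filter_upwards [hxG] with n hn using (hx n hn).symm

lemma tendsto_measure_compl_of_ae_eventually_mem (μ : Measure X) [IsFiniteMeasure μ]
    {G : ℕ → Set X} (hG : ∀ n, MeasurableSet (G n)) (hG_ev : ∀ᵐ x ∂μ, ∀ᶠ n in atTop, x ∈ G n) :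
    Tendsto (fun n => μ (G n)ᶜ) atTop (𝓝 0) := by
  rw [← measure_empty (μ := μ)]
  refine tendsto_measure_of_ae_tendsto_indicator_of_isFiniteMeasure atTop .empty
    (fun n => (hG n).compl) ?_
  filter_upwards [hG_ev] with x hx
  filter_upwards [hx] with n hn
  simpa using hn

lemma tendsto_comp_mixture_apply_compl (hε : ∀ n, ε n ≤ 1) {η : ℕ → Kernel X X}
    [∀ n, IsMarkovKernel (η n)] {ξ : Measure X} [IsFiniteMeasure μ] [IsFiniteMeasure ν]
    (hμ : μ ≪ ξ) (hν : ν ≪ ξ) {G : ℕ → Set X} (hG : ∀ n, MeasurableSet (G n))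
    (hη : ∀ n, FixesOn (η n) (G n)) (hG_ev : ∀ᵐ x ∂ξ, ∀ᶠ n in atTop, x ∈ G n) :
    Tendsto (fun n => (η n ∘ₘ mixture (ε n) μ ν) (G n)ᶜ) atTop (𝓝 0) := by
  refine tendsto_of_tendsto_of_tendsto_of_le_of_le tendsto_const_nhds
    (tendsto_measure_compl_of_ae_eventually_mem (μ + ν) hG ((hμ.add_left hν).ae_le hG_ev))
    (fun _ => zero_le) fun n => ?_
  dsimp only
  rw [(hη n).comp_apply_compl (hG n)]
  exact mixture_le_add (hε n) _

lemma tendsto_klDiv_comp_mixture (hε : ∀ n, ε n ≤ 1) (hε_lim : Tendsto ε atTop (𝓝 0))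
    {η : ℕ → Kernel X X} [∀ n, IsMarkovKernel (η n)] {ξ : Measure X} [SigmaFinite ξ]
    {G : ℕ → Set X} (hG : ∀ n, MeasurableSet (G n)) (hη : ∀ n, FixesOn (η n) (G n))
    (hG_ev : ∀ᵐ x ∂ξ, ∀ᶠ n in atTop, x ∈ G n) {μ' ν' : Measure X} [IsFiniteMeasure μ]
    [IsFiniteMeasure ν] [IsFiniteMeasure μ'] [IsFiniteMeasure ν'] (hμν : μ ≪ ν) (hν : ν ≪ ξ)
    (hν' : ν' ≪ ξ) (h_fin : klDiv μ' ν' ≠ ∞) {νs : ℕ → Measure X} [∀ n, IsFiniteMeasure (νs n)]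
    (hνs : ∀ n, νs n ≪ ξ) {K : ℝ≥0} (hK : 1 ≤ K)
    (hle : ∀ n, η n ∘ₘ mixture (ε n) ν ν' ≤ K • νs n)
    (hνs_res : ∀ n, (νs n).restrict (G n) = (mixture (ε n) ν ν').restrict (G n))
    (hνs_compl : Tendsto (fun n => νs n (G n)ᶜ) atTop (𝓝 0)) :
    Tendsto (fun n => klDiv (η n ∘ₘ mixture (ε n) μ μ') (νs n)) atTop (𝓝 (klDiv μ ν)) := by
  have hμ'ν' : μ' ≪ ν' := (klDiv_ne_top_iff.mp h_fin).1
  have le_liminf : klDiv μ ν ≤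
      liminf (fun n => klDiv (η n ∘ₘ mixture (ε n) μ μ') (νs n)) atTop :=
    klDiv_le_liminf_of_tendsto_rnDeriv hμν hν hνs
      (ae_tendsto_rnDeriv_of_restrict_eq_mixture hε_lim hG hG_ev fun n =>
        (hη n).restrict_comp (hG n) _)
      (ae_tendsto_rnDeriv_of_restrict_eq_mixture hε_lim hG hG_ev hνs_res)
  have le_error (n : ℕ) : klDiv (η n ∘ₘ mixture (ε n) μ μ') (νs n) ≤
      ((1 - ε n : ℝ≥0) * klDiv μ ν + ε n * klDiv μ' ν') +
        (ENNReal.ofReal (Real.log K) * (η n ∘ₘ mixture (ε n) μ μ') (G n)ᶜ + νs n (G n)ᶜ) :=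
    (klDiv_le_of_le_smul_of_restrict_eq _ hK (hle n) (hG n)
      (((hη n).restrict_comp (hG n) _).trans (hνs_res n).symm)).trans
      (add_le_add_left ((klDiv_comp_right_le _ _ (η n)).trans (klDiv_mixture_le _ _ _ _ _)) _)
  have error_lim := (tendsto_one_sub_mul_add_mul hε_lim (tendsto_const_nhds (x := klDiv μ ν))
    (tendsto_const_nhds (x := klDiv μ' ν')) h_fin).add
      ((ENNReal.Tendsto.const_mul (tendsto_comp_mixture_apply_compl hε (hμν.trans hν)
        (hμ'ν'.trans hν') hG hη hG_ev) (.inr (ENNReal.ofReal_ne_top (r := Real.log K)))).add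
          hνs_compl)
  refine tendsto_of_le_liminf_of_limsup_le le_liminf ?_
  simpa using (limsup_le_limsup (.of_forall le_error)).trans_eq error_lim.limsup_eq

end Mixtures

section Supports

variable {X Y : Type*} [TopologicalSpace X] [MeasurableSpace X] [TopologicalSpace Y]
  [MeasurableSpace Y]

lemma msupp_subset_of_absolutelyContinuous {μ ν : Measure X} (h : μ ≪ ν) :
    msupp μ ⊆ msupp ν :=
  fun _ hx U hU hxU => pos_iff_ne_zero.mpr fun hνU => (hx U hU hxU).ne' (h hνU)

lemma msupp_subset_compl {μ : Measure X} {U : Set X} (hU : IsOpen U) (hμU : μ U = 0) :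
    msupp μ ⊆ Uᶜ :=
  fun _ hx hxU => (hx U hU hxU).ne' hμU

lemma msupp_prod (μ : Measure X) (ν : Measure Y) [SFinite ν] :
    msupp (μ.prod ν) = msupp μ ×ˢ msupp ν := by
  refine Subset.antisymm (fun z hz => ⟨fun U hU hzU => ?_, fun V hV hzV => ?_⟩)
    fun z hz W hW hzW => ?_
  · have hpos := hz (U ×ˢ univ) (hU.prod isOpen_univ) ⟨hzU, mem_univ _⟩
    rw [Measure.prod_prod] at hpos
    exact (CanonicallyOrderedAdd.mul_pos.mp hpos).1
  · have hpos := hz (univ ×ˢ V) (isOpen_univ.prod hV) ⟨mem_univ _, hzV⟩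
    rw [Measure.prod_prod] at hpos
    exact (CanonicallyOrderedAdd.mul_pos.mp hpos).2
  · obtain ⟨U, V, hU, hV, hzU, hzV, hUV⟩ := isOpen_prod_iff.mp hW z.1 z.2 hzW
    calc 0 < μ U * ν V := ENNReal.mul_pos (hz.1 U hU hzU).ne' (hz.2 V hV hzV).ne'
      _ = μ.prod ν (U ×ˢ V) := (Measure.prod_prod U V).symm
      _ ≤ μ.prod ν W := measure_mono hUV

end Supports

lemma withDensity_mono_measure {X : Type*} [MeasurableSpace X] {μ ν : Measure X} (h : μ ≤ ν)
    (w : X → ℝ≥0∞) : μ.withDensity w ≤ ν.withDensity w := by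
  refine Measure.le_iff.mpr fun s hs => ?_
  rw [withDensity_apply _ hs, withDensity_apply _ hs]
  exact lintegral_mono' (Measure.restrict_mono subset_rfl h) le_rfl

lemma prod_compl_prod_le {X Y : Type*} [MeasurableSpace X] [MeasurableSpace Y] (μ : Measure X)
    (ν : Measure Y) [IsProbabilityMeasure μ] [IsProbabilityMeasure ν] (G : Set X) (H : Set Y) :
    μ.prod ν (G ×ˢ H)ᶜ ≤ μ Gᶜ + ν Hᶜ := by
  rw [compl_prod_eq_union]
  exact (measure_union_le _ _).trans_eq (by simp)

section WeakConvergence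

variable {X : Type*} [MeasurableSpace X]

lemma coe_toPM [Nonempty X] (μ : Measure X) [h : IsProbabilityMeasure μ] :
    (toPM μ : Measure X) = μ := by
  simp [toPM, h]

lemma coe_toFM (μ : Measure X) [h : IsFiniteMeasure μ] : (toFM μ : Measure X) = μ := by
  simp [toFM, h]

variable [TopologicalSpace X] [OpensMeasurableSpace X] {ε : ℕ → ℝ≥0} {η : ℕ → Kernel X X}
  [∀ n, IsMarkovKernel (η n)] {ξ μ ν : Measure X}

lemma tendsto_toPM_comp_mixture [Nonempty X] [IsProbabilityMeasure μ] [IsProbabilityMeasure ν]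
    (hε : ∀ n, ε n ≤ 1) (hε_lim : Tendsto ε atTop (𝓝 0))
    (hη : ∀ᵐ x ∂ξ, ∀ᶠ n in atTop, η n x = Measure.dirac x) (hμ : μ ≪ ξ) (hν : ν ≪ ξ) :
    Tendsto (fun n => toPM (η n ∘ₘ mixture (ε n) μ ν)) atTop (𝓝 (toPM μ)) := by
  have (n : ℕ) : IsProbabilityMeasure (mixture (ε n) μ ν) := isProbabilityMeasure_mixture (hε n)
  refine ProbabilityMeasure.tendsto_iff_forall_lintegral_tendsto.mpr fun f => ?_
  simp only [coe_toPM]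
  exact tendsto_lintegral_comp_mixture hε_lim hη hμ hν (by fun_prop) fun x =>
    ENNReal.coe_le_coe.mpr (BoundedContinuousFunction.NNReal.upper_bound f x)

lemma tendsto_toFM_comp_mixture [IsFiniteMeasure μ] [IsFiniteMeasure ν]
    (hε_lim : Tendsto ε atTop (𝓝 0)) (hη : ∀ᵐ x ∂ξ, ∀ᶠ n in atTop, η n x = Measure.dirac x)
    (hμ : μ ≪ ξ) (hν : ν ≪ ξ) :
    Tendsto (fun n => toFM (η n ∘ₘ mixture (ε n) μ ν)) atTop (𝓝 (toFM μ)) := by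
  refine FiniteMeasure.tendsto_iff_forall_lintegral_tendsto.mpr fun f => ?_
  simp only [coe_toFM]
  exact tendsto_lintegral_comp_mixture hε_lim hη hμ hν (by fun_prop) fun x =>
    ENNReal.coe_le_coe.mpr (BoundedContinuousFunction.NNReal.upper_bound f x)

end WeakConvergence

namespace ChainSetting

section Rates

variable {X : Type*} [MeasurableSpace X] [TopologicalSpace X] (S : ChainSetting X)

instance : IsProbabilityMeasure S.lam := S.lam_prob

/-- The density `r(x) p(x, y)` of the jump rates `c(x, dy)` with respect to `λ`, as a function on
the product space. -/
def rate (z : X × X) : ℝ≥0∞ := ENNReal.ofReal (S.r z.1 * S.p z.1 z.2)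

/-- Uniform bounds `p₀ ≤ p ≤ p₁` and `r ≤ R` with `p₀ > 0`, which exist on a compact space. -/
structure HasBounds (p₀ p₁ R : ℝ≥0) : Prop where
  pos : 0 < p₀
  le_p : ∀ x y, p₀ ≤ S.p x y
  p_le : ∀ x y, S.p x y ≤ p₁
  r_le : ∀ x, S.r x ≤ R

lemma exists_hasBounds [CompactSpace X] : ∃ p₀ p₁ R, S.HasBounds p₀ p₁ R := by
  obtain ⟨R, hR⟩ := isCompact_univ.exists_bound_of_continuousOn S.r_cont.continuousOn
  obtain ⟨p₁, hp₁⟩ := isCompact_univ.exists_bound_of_continuousOn S.p_cont.continuousOn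
  obtain ⟨p₀, hp₀, hp₀_le⟩ := isCompact_univ.exists_forall_le' S.p_cont.continuousOn
    fun z _ => S.p_pos z.1 z.2
  refine ⟨p₀.toNNReal, p₁.toNNReal, R.toNNReal, Real.toNNReal_pos.mpr hp₀, fun x y => ?_,
    fun x y => ?_, fun x => ?_⟩
  · rw [Real.coe_toNNReal _ hp₀.le]
    exact hp₀_le (x, y) (mem_univ _)
  · exact (le_abs_self _).trans <| (hp₁ (x, y) (mem_univ _)).trans (Real.le_coe_toNNReal p₁)
  · exact (le_abs_self _).trans <| (hR x (mem_univ _)).trans (Real.le_coe_toNNReal R)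

lemma muc_mixture (t : ℝ≥0) (μ ν : Measure X) [SFinite μ] [SFinite ν] :
    S.muc (mixture t μ ν) = mixture t (S.muc μ) (S.muc ν) := by
  simp only [muc, mixture, ENNReal.smul_def, Measure.add_prod, Measure.prod_smul_left,
    withDensity_add_measure, withDensity_smul_measure]

variable {S}

lemma muc_absolutelyContinuous {μ : Measure X} (hμ : μ ≪ S.lam) :
    S.muc μ ≪ S.lam.prod S.lam :=
  (withDensity_absolutelyContinuous _ _).trans (hμ.prod .rfl)

lemma rateI0_eq_klDiv {μ : Measure X} {Q : Measure (X × X)} [IsFiniteMeasure (S.muc μ)]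
    [IsFiniteMeasure Q] (hQ : Q.fst = Q.snd) : S.rateI0 μ Q = klDiv Q (S.muc μ) := by
  by_cases hac : Q ≪ S.muc μ
  · rw [rateI0, if_pos ⟨hQ, hac⟩, klDiv_eq_lintegral_klFun_of_ac hac]
    refine lintegral_congr_ae ?_
    filter_upwards [Q.rnDeriv_lt_top (S.muc μ)] with z hz
    rw [PsiE, if_neg hz.ne, klFun]
    congr 1
    ring
  · rw [rateI0, if_neg fun h => hac h.2, klDiv_of_not_ac hac]

lemma muc_restrict_prod_congr {μ ν : Measure X} [SFinite μ] [SFinite ν] {G H : Set X}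
    (hG : MeasurableSet G) (hH : MeasurableSet H) (h : μ.restrict G = ν.restrict G) :
    (S.muc μ).restrict (G ×ˢ H) = (S.muc ν).restrict (G ×ˢ H) := by
  rw [muc, muc, restrict_withDensity (hG.prod hH), restrict_withDensity (hG.prod hH),
    ← Measure.prod_restrict, ← Measure.prod_restrict, h]

namespace HasBounds

variable {p₀ p₁ R : ℝ≥0} (hb : S.HasBounds p₀ p₁ R)
include hb

lemma muc_le (μ : Measure X) : S.muc μ ≤ (R * p₁) • μ.prod S.lam := by
  have rate_le (z : X × X) : ENNReal.ofReal (S.r z.1 * S.p z.1 z.2) ≤ (R * p₁ : ℝ≥0) := by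
    rw [← ENNReal.ofReal_coe_nnreal, NNReal.coe_mul]
    exact ENNReal.ofReal_le_ofReal (mul_le_mul (hb.r_le _) (hb.p_le _ _) (S.p_pos _ _).le R.2)
  calc S.muc μ ≤ (μ.prod S.lam).withDensity fun _ => (R * p₁ : ℝ≥0) :=
        withDensity_mono (.of_forall rate_le)
    _ = (R * p₁) • μ.prod S.lam := withDensity_const _

lemma isFiniteMeasure_muc (μ : Measure X) [IsFiniteMeasure μ] : IsFiniteMeasure (S.muc μ) :=
  isFiniteMeasure_of_le _ (hb.muc_le μ)

lemma rate_le {z z' : X × X} (h : S.r z.1 ≤ 2 * S.r z'.1) :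
    S.rate z ≤ (2 * p₁ / p₀ : ℝ≥0) * S.rate z' := by
  have hp₀ : (0 : ℝ) < p₀ := hb.pos
  have hr := S.r_nonneg z'.1
  rw [rate, rate, ← ENNReal.ofReal_coe_nnreal, ← ENNReal.ofReal_mul (by positivity)]
  refine ENNReal.ofReal_le_ofReal ?_
  calc S.r z.1 * S.p z.1 z.2 ≤ 2 * S.r z'.1 * p₁ :=
        mul_le_mul h (hb.p_le _ _) (S.p_pos _ _).le (by positivity)
    _ = 2 * p₁ / p₀ * (S.r z'.1 * p₀) := by field_simp
    _ ≤ (2 * p₁ / p₀ : ℝ≥0) * (S.r z'.1 * S.p z'.1 z'.2) := by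
        push_cast
        gcongr
        exact hb.le_p _ _

end HasBounds

end Rates

section Measurability

variable {X : Type*} [MeasurableSpace X] [TopologicalSpace X] [OpensMeasurableSpace X]
  (S : ChainSetting X)

@[fun_prop]
lemma measurable_r : Measurable S.r := S.r_cont.measurable

lemma measurable_rate [SecondCountableTopology X] : Measurable S.rate :=
  (S.measurable_r.comp measurable_fst |>.mul S.p_cont.measurable).ennreal_ofReal

lemma ae_r_pos : ∀ᵐ x ∂S.lam, 0 < S.r x := by
  filter_upwards [ae_lt_top (by fun_prop) S.inv_r_int] with x hx
  simpa using hx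

end Measurability

section Raise

variable {X : Type*} [MeasurableSpace X] [TopologicalSpace X] (S : ChainSetting X)

/-- The set `A_d = {r < d}`. -/
def lowRate (d : ℝ) : Set X := {x | S.r x < d}

/-- The estimate `λ(A_{2d}) ≤ C λ(A_{2d} \ A_d)` of condition (iv) at the level `d`. -/
def DoublesAt (C : ℝ≥0) (d : ℝ) : Prop :=
  S.lam (S.lowRate (2 * d)) ≤ C * S.lam (S.lowRate (2 * d) \ S.lowRate d)

lemma CondIV.exists_doublesAt {S : ChainSetting X} (h : S.CondIV) : ∃ δ : ℕ → ℝ,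
    (∀ n, 0 < δ n) ∧ Tendsto δ atTop (𝓝 0) ∧ ∃ C : ℝ≥0, ∀ n, S.DoublesAt C (δ n) := by
  obtain ⟨δ, hδ_pos, hδ_lim, C, hC_top, hC⟩ := h
  lift C to ℝ≥0 using hC_top
  exact ⟨δ, hδ_pos, hδ_lim, C, hC⟩

lemma isOpen_lowRate (d : ℝ) : IsOpen (S.lowRate d) := isOpen_lt S.r_cont continuous_const

variable [OpensMeasurableSpace X]

lemma measurableSet_lowRate (d : ℝ) : MeasurableSet (S.lowRate d) :=
  (S.isOpen_lowRate d).measurableSet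

lemma ae_eventually_mem_compl_lowRate {δ : ℕ → ℝ} (hδ : Tendsto δ atTop (𝓝 0)) :
    ∀ᵐ x ∂S.lam, ∀ᶠ n in atTop, x ∈ (S.lowRate (2 * δ n))ᶜ := by
  have two_mul_lim : Tendsto (fun n => 2 * δ n) atTop (𝓝 0) := by simpa using hδ.const_mul 2
  filter_upwards [S.ae_r_pos] with x hx
  filter_upwards [two_mul_lim.eventually_lt_const hx] with n hn using not_lt.mpr hn.le

lemma ae_eventually_mem_prod_compl_lowRate {δ : ℕ → ℝ} (hδ : Tendsto δ atTop (𝓝 0)) :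
    ∀ᵐ z ∂S.lam.prod S.lam, ∀ᶠ n in atTop,
      z ∈ (S.lowRate (2 * δ n))ᶜ ×ˢ (S.lowRate (2 * δ n))ᶜ := by
  have ae_mem := S.ae_eventually_mem_compl_lowRate hδ
  filter_upwards [Measure.quasiMeasurePreserving_fst.ae ae_mem,
    Measure.quasiMeasurePreserving_snd.ae ae_mem] with z hz₁ hz₂ using hz₁.and hz₂

/-- The kernel which resamples the points of `A_{2d}` from `λ` conditioned on `A_{2d} \ A_d`. It
never decreases `r` by more than a factor of `2`. -/
def raise (d : ℝ) : Kernel X X :=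
  collapse (S.measurableSet_lowRate (2 * d)) S.lam[|S.lowRate (2 * d) \ S.lowRate d]

lemma fixesOn_raise (d : ℝ) : FixesOn (S.raise d) (S.lowRate (2 * d))ᶜ := by
  refine fixesOn_collapse _ ?_
  rw [cond_apply ((S.measurableSet_lowRate _).diff (S.measurableSet_lowRate _)),
    (disjoint_compl_right.mono_left sdiff_subset).inter_eq, measure_empty, mul_zero]

lemma raise_comp_apply_lowRate {d : ℝ} (hd : 0 ≤ d) (μ : Measure X) :
    (S.raise d ∘ₘ μ) (S.lowRate d) = 0 := by
  have hsub : S.lowRate d ⊆ S.lowRate (2 * d) := fun x (hx : S.r x < d) =>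
    show S.r x < 2 * d by linarith
  rw [raise, collapse_comp, Measure.add_apply, Measure.smul_apply,
    cond_apply ((S.measurableSet_lowRate _).diff (S.measurableSet_lowRate _)),
    Measure.restrict_apply (S.measurableSet_lowRate d), disjoint_sdiff_left.inter_eq,
    (disjoint_compl_right.mono_left hsub).inter_eq, measure_empty, measure_empty]
  simp

lemma ae_raise_r_le (d : ℝ) (x : X) : ∀ᵐ y ∂S.raise d x, S.r x ≤ 2 * S.r y := by
  by_cases hx : x ∈ S.lowRate (2 * d)
  · rw [raise, collapse_apply_of_mem _ hx]
    filter_upwards [ae_cond_mem ((S.measurableSet_lowRate _).diff (S.measurableSet_lowRate _))]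
      with y hy
    have hxd : S.r x < 2 * d := hx
    have hyd : d ≤ S.r y := not_lt.mp hy.2
    linarith
  · rw [raise, collapse_apply_of_notMem _ hx,
      ae_dirac_iff (measurableSet_le measurable_const (by fun_prop))]
    linarith [S.r_nonneg x]

variable {S} {C : ℝ≥0} {d : ℝ}

lemma isMarkovKernel_raise (hC : S.DoublesAt C d) : IsMarkovKernel (S.raise d) := by
  refine isMarkovKernel_collapse _ fun hne => cond_isProbabilityMeasure fun h0 => ?_
  rw [DoublesAt, h0, mul_zero] at hC
  exact (S.lam_pos _ (S.isOpen_lowRate _) hne).not_ge hC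

lemma raise_comp_lam_le (hC : S.DoublesAt C d) :
    S.raise d ∘ₘ S.lam ≤ (C + 1) • S.lam := by
  have smul_cond_le : S.lam (S.lowRate (2 * d)) • S.lam[|S.lowRate (2 * d) \ S.lowRate d] ≤
      C • S.lam := by
    rw [ProbabilityTheory.cond, smul_smul, ENNReal.smul_def]
    gcongr
    · rw [← div_eq_mul_inv]
      exact ENNReal.div_le_of_le_mul hC
    · exact Measure.restrict_le_self
  calc S.raise d ∘ₘ S.lam ≤ C • S.lam + S.lam := by
        rw [raise, collapse_comp]
        exact add_le_add smul_cond_le Measure.restrict_le_self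
    _ = (C + 1) • S.lam := by rw [add_smul, one_smul]

lemma raise_comp_absolutelyContinuous (hC : S.DoublesAt C d) {μ : Measure X}
    (hμ : μ ≪ S.lam) : S.raise d ∘ₘ μ ≪ S.lam :=
  (hμ.comp_right _).trans <| (Measure.absolutelyContinuous_of_le (raise_comp_lam_le hC)).trans
    (Measure.smul_absolutelyContinuous (c := ((C + 1 : ℝ≥0) : ℝ≥0∞)))

lemma HasBounds.raise_comp_muc_le [SecondCountableTopology X] {p₀ p₁ R : ℝ≥0}
    (hb : S.HasBounds p₀ p₁ R) (hC : S.DoublesAt C d) (μ : Measure X) [IsFiniteMeasure μ] :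
    (S.raise d ∥ₖ S.raise d) ∘ₘ S.muc μ ≤
      (2 * p₁ / p₀ * (C + 1)) • S.muc (S.raise d ∘ₘ μ) := by
  have := isMarkovKernel_raise hC
  have rate_le (z : X × X) : ∀ᵐ z' ∂(S.raise d ∥ₖ S.raise d) z,
      S.rate z ≤ (2 * p₁ / p₀ : ℝ≥0) * S.rate z' := by
    rw [Kernel.parallelComp_apply]
    filter_upwards [Measure.quasiMeasurePreserving_fst.ae (S.ae_raise_r_le d z.1)] with z' hz'
      using hb.rate_le hz'
  calc (S.raise d ∥ₖ S.raise d) ∘ₘ S.muc μ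
      ≤ (2 * p₁ / p₀) • ((S.raise d ∘ₘ μ).prod (S.raise d ∘ₘ S.lam)).withDensity S.rate := by
        rw [← parallelComp_comp_prod]
        exact comp_withDensity_le _ _ S.measurable_rate rate_le
    _ ≤ (2 * p₁ / p₀) • ((S.raise d ∘ₘ μ).prod ((C + 1) • S.lam)).withDensity S.rate := by
        gcongr
        exact withDensity_mono_measure (by gcongr; exact raise_comp_lam_le hC) _
    _ = (2 * p₁ / p₀ * (C + 1)) • S.muc (S.raise d ∘ₘ μ) := by
        simp only [ENNReal.smul_def, Measure.prod_smul_right, withDensity_smul_measure,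
          smul_smul, ENNReal.coe_mul]
        rfl

end Raise

section Reference

variable {X : Type*} [MeasurableSpace X] [TopologicalSpace X] (S : ChainSetting X)

/-- The normalizing constant `λ(1/r)⁻¹` of the probability measure `S.piMeas S.lam`. -/
def refMass : ℝ≥0∞ := (∫⁻ x, (ENNReal.ofReal (S.r x))⁻¹ ∂S.lam)⁻¹

/-- The flow `λ(1/r)⁻¹ λ ⊗ λ`. The pair of `S.piMeas S.lam` and this flow has full supports,
equal marginals and finite rate, so that mixing it into `(μ, Q)` costs little and makes the
supports full. -/
def refFlow : Measure (X × X) := S.refMass • S.lam.prod S.lam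

lemma refMass_ne_zero : S.refMass ≠ 0 := ENNReal.inv_ne_zero.mpr S.inv_r_int

lemma piMeas_absolutelyContinuous : S.piMeas S.lam ≪ S.lam :=
  Measure.smul_absolutelyContinuous.trans (withDensity_absolutelyContinuous _ _)

lemma refFlow_absolutelyContinuous : S.refFlow ≪ S.lam.prod S.lam :=
  Measure.smul_absolutelyContinuous

lemma absolutelyContinuous_refFlow : S.lam.prod S.lam ≪ S.refFlow :=
  Measure.absolutelyContinuous_smul S.refMass_ne_zero

lemma fst_refFlow_eq_snd : S.refFlow.fst = S.refFlow.snd := by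
  simp [refFlow, Measure.fst, Measure.snd, Measure.map_smul]

variable [OpensMeasurableSpace X]

lemma refMass_ne_top : S.refMass ≠ ∞ := by
  rw [refMass, ENNReal.inv_ne_top, Ne, lintegral_eq_zero_iff (by fun_prop)]
  intro h
  have ae_false : ∀ᵐ _ ∂S.lam, False := h.mono fun x hx => by simp at hx
  exact IsProbabilityMeasure.ne_zero S.lam (by simpa using ae_false)

instance : IsFiniteMeasure S.refFlow :=
  ⟨by simp [refFlow, S.refMass_ne_top.lt_top]⟩

instance : IsProbabilityMeasure (S.piMeas S.lam) := by
  refine ⟨?_⟩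
  rw [piMeas, Measure.smul_apply, withDensity_apply _ .univ, Measure.restrict_univ, smul_eq_mul]
  exact ENNReal.inv_mul_cancel (ENNReal.inv_ne_top.mp S.refMass_ne_top) S.inv_r_int

lemma absolutelyContinuous_piMeas : S.lam ≪ S.piMeas S.lam :=
  (withDensity_absolutelyContinuous' (by fun_prop) (.of_forall fun x => by simp)).trans
    (Measure.absolutelyContinuous_smul S.refMass_ne_zero)

variable [SecondCountableTopology X]

lemma muc_piMeas : S.muc (S.piMeas S.lam) =
    S.refMass • (S.lam.prod S.lam).withDensity fun z => ENNReal.ofReal (S.p z.1 z.2) := by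
  have ae_eq : (fun z : X × X => (ENNReal.ofReal (S.r z.1))⁻¹) * S.rate
      =ᵐ[S.lam.prod S.lam] fun z => ENNReal.ofReal (S.p z.1 z.2) := by
    filter_upwards [Measure.quasiMeasurePreserving_fst.ae S.ae_r_pos] with z hz
    rw [Pi.mul_apply, rate, ENNReal.ofReal_mul (S.r_nonneg _), ← mul_assoc,
      ENNReal.inv_mul_cancel (by simpa) ENNReal.ofReal_ne_top, one_mul]
  rw [muc, piMeas, Measure.prod_smul_left, withDensity_smul_measure,
    prod_withDensity_left (by fun_prop), ← withDensity_congr_ae ae_eq,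
    withDensity_mul _ (by fun_prop) S.measurable_rate]
  rfl

variable {S} {p₀ p₁ R : ℝ≥0}

lemma HasBounds.smul_refFlow_le (hb : S.HasBounds p₀ p₁ R) :
    p₀ • S.refFlow ≤ S.muc (S.piMeas S.lam) := by
  have le_p : p₀ • S.lam.prod S.lam ≤
      (S.lam.prod S.lam).withDensity fun z => ENNReal.ofReal (S.p z.1 z.2) :=
    (withDensity_const _).ge.trans <| withDensity_mono <| .of_forall fun z =>
      (ENNReal.ofReal_coe_nnreal (p := p₀)).ge.trans (ENNReal.ofReal_le_ofReal (hb.le_p z.1 z.2))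
  rw [muc_piMeas, refFlow, smul_comm]
  gcongr

lemma HasBounds.klDiv_refFlow_ne_top (hb : S.HasBounds p₀ p₁ R) :
    klDiv S.refFlow (S.muc (S.piMeas S.lam)) ≠ ∞ := by
  have := hb.isFiniteMeasure_muc (S.piMeas S.lam)
  have refFlow_le : S.refFlow ≤ max 1 p₀⁻¹ • S.muc (S.piMeas S.lam) :=
    calc S.refFlow = p₀⁻¹ • p₀ • S.refFlow := by
          rw [smul_smul, inv_mul_cancel₀ hb.pos.ne', one_smul]
      _ ≤ max 1 p₀⁻¹ • S.muc (S.piMeas S.lam) := by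
          gcongr
          exacts [le_max_right _ _, hb.smul_refFlow_le]
  refine ((klDiv_le_of_le_smul S.refFlow (le_max_left _ _) refFlow_le).trans_lt ?_).ne
  simp [ENNReal.mul_lt_top]

end Reference

section Approximation

variable {X : Type*} [MeasurableSpace X] [TopologicalSpace X] [OpensMeasurableSpace X]
  (S : ChainSetting X)

/-- The measure `μ`, mixed with `S.piMeas S.lam` and then pushed away from `E₀`. -/
def approxMeas (d : ℝ) (t : ℝ≥0) (μ : Measure X) : Measure X :=
  S.raise d ∘ₘ mixture t μ (S.piMeas S.lam)

/-- The flow which accompanies `S.approxMeas d t μ`: both endpoints of a jump are resampled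
independently. -/
def approxFlow (d : ℝ) (t : ℝ≥0) (Q : Measure (X × X)) : Measure (X × X) :=
  (S.raise d ∥ₖ S.raise d) ∘ₘ mixture t Q S.refFlow

variable {S} {C : ℝ≥0} {d : ℝ} {t : ℝ≥0} {μ : Measure X} {Q : Measure (X × X)}

lemma fst_approxFlow_eq_snd [IsMarkovKernel (S.raise d)] (hQ : Q.fst = Q.snd) :
    (S.approxFlow d t Q).fst = (S.approxFlow d t Q).snd := by
  rw [approxFlow, fst_parallelComp_comp, snd_parallelComp_comp, Measure.fst, Measure.snd,
    map_mixture measurable_fst, map_mixture measurable_snd]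
  exact congrArg₂ (fun ν ν' => S.raise d ∘ₘ mixture t ν ν') hQ S.fst_refFlow_eq_snd

instance [IsMarkovKernel (S.raise d)] [IsFiniteMeasure μ] :
    IsFiniteMeasure (S.approxMeas d t μ) := by
  unfold approxMeas; infer_instance

instance [IsMarkovKernel (S.raise d)] [IsFiniteMeasure Q] :
    IsFiniteMeasure (S.approxFlow d t Q) := by
  unfold approxFlow; infer_instance

lemma isProbabilityMeasure_approxMeas [IsMarkovKernel (S.raise d)] [IsProbabilityMeasure μ]
    (ht : t ≤ 1) : IsProbabilityMeasure (S.approxMeas d t μ) := by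
  have := isProbabilityMeasure_mixture (μ := μ) (ν := S.piMeas S.lam) ht
  unfold approxMeas; infer_instance

lemma absolutelyContinuous_approxMeas (ht : t ≠ 0) (μ : Measure X) :
    S.raise d ∘ₘ S.lam ≪ S.approxMeas d t μ :=
  (S.absolutelyContinuous_piMeas.trans (absolutelyContinuous_mixture ht _ _)).comp_right _

lemma approxFlow_absolutelyContinuous_prod [IsMarkovKernel (S.raise d)] [IsFiniteMeasure μ]
    (ht : t ≠ 0) (hQ : Q ≪ S.lam.prod S.lam) :
    S.approxFlow d t Q ≪ (S.approxMeas d t μ).prod (S.approxMeas d t μ) := by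
  refine .trans ?_ ((absolutelyContinuous_approxMeas ht μ).prod
    (absolutelyContinuous_approxMeas ht μ))
  rw [← parallelComp_comp_prod]
  exact (mixture_absolutelyContinuous hQ S.refFlow_absolutelyContinuous).comp_right _

lemma prod_absolutelyContinuous_approxFlow [IsMarkovKernel (S.raise d)] [IsFiniteMeasure μ]
    (ht : t ≠ 0) (hμ : μ ≪ S.lam) :
    (S.approxMeas d t μ).prod (S.approxMeas d t μ) ≪ S.approxFlow d t Q := by
  have mixture_ac : mixture t μ (S.piMeas S.lam) ≪ S.lam :=
    mixture_absolutelyContinuous hμ S.piMeas_absolutelyContinuous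
  rw [approxMeas, ← parallelComp_comp_prod]
  exact ((mixture_ac.prod mixture_ac).trans (S.absolutelyContinuous_refFlow.trans
    (absolutelyContinuous_mixture ht _ _))).comp_right _

lemma memM2_approx [IsFiniteMeasure μ] (hd : 0 < d) (hC : S.DoublesAt C d) (ht : t ≠ 0)
    (hμ : μ ≪ S.lam) (hQ : Q ≪ S.lam.prod S.lam) :
    S.MemM2 (S.approxMeas d t μ) (S.approxFlow d t Q) := by
  have := isMarkovKernel_raise hC
  have approxMeas_ac : S.approxMeas d t μ ≪ S.lam :=
    raise_comp_absolutelyContinuous hC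
      (mixture_absolutelyContinuous hμ S.piMeas_absolutelyContinuous)
  have flow_ac := approxFlow_absolutelyContinuous_prod (d := d) (μ := μ) ht hQ
  refine ⟨?_, ?_, approxMeas_ac, flow_ac.trans (approxMeas_ac.prod approxMeas_ac)⟩
  · exact (msupp_subset_compl (S.isOpen_lowRate d) (S.raise_comp_apply_lowRate hd.le _)).trans
      (compl_subset_compl.mpr fun x (hx : S.r x = 0) => hx.trans_lt hd)
  · rw [← msupp_prod]
    exact Subset.antisymm (msupp_subset_of_absolutelyContinuous flow_ac)
      (msupp_subset_of_absolutelyContinuous (prod_absolutelyContinuous_approxFlow ht hμ))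

end Approximation

section Convergence

variable {X : Type*} [MeasurableSpace X] [TopologicalSpace X] [OpensMeasurableSpace X]
  {S : ChainSetting X} {δ : ℕ → ℝ} {ε : ℕ → ℝ≥0} {C p₀ p₁ R : ℝ≥0} {μ : Measure X}
  {Q : Measure (X × X)}

lemma tendsto_toPM_approxMeas [Nonempty X] (hδ : Tendsto δ atTop (𝓝 0))
    (hC : ∀ n, S.DoublesAt C (δ n)) (hε : ∀ n, ε n ≤ 1) (hε_lim : Tendsto ε atTop (𝓝 0))
    [IsProbabilityMeasure μ] (hμ : μ ≪ S.lam) :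
    Tendsto (fun n => toPM (S.approxMeas (δ n) (ε n) μ)) atTop (𝓝 (toPM μ)) := by
  have (n : ℕ) := isMarkovKernel_raise (hC n)
  refine tendsto_toPM_comp_mixture hε hε_lim ?_ hμ S.piMeas_absolutelyContinuous
  filter_upwards [S.ae_eventually_mem_compl_lowRate hδ] with x hx
  filter_upwards [hx] with n hn using (S.fixesOn_raise (δ n)).eq_dirac x hn

lemma tendsto_muc_approxMeas_compl (hb : S.HasBounds p₀ p₁ R) (hδ : Tendsto δ atTop (𝓝 0))
    (hC : ∀ n, S.DoublesAt C (δ n)) (hε : ∀ n, ε n ≤ 1) [IsProbabilityMeasure μ]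
    (hμ : μ ≪ S.lam) : Tendsto (fun n => S.muc (S.approxMeas (δ n) (ε n) μ)
      ((S.lowRate (2 * δ n))ᶜ ×ˢ (S.lowRate (2 * δ n))ᶜ)ᶜ) atTop (𝓝 0) := by
  have (n : ℕ) := isMarkovKernel_raise (hC n)
  have (n : ℕ) := isProbabilityMeasure_approxMeas (S := S) (d := δ n) (μ := μ) (hε n)
  have hG (n : ℕ) : MeasurableSet (S.lowRate (2 * δ n))ᶜ := (S.measurableSet_lowRate _).compl
  have hG_ev := S.ae_eventually_mem_compl_lowRate hδ
  have bound_lim := ENNReal.Tendsto.const_mul (a := ((R * p₁ : ℝ≥0) : ℝ≥0∞))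
    ((tendsto_comp_mixture_apply_compl hε hμ S.piMeas_absolutelyContinuous hG
      (fun n => S.fixesOn_raise (δ n)) hG_ev).add
      (tendsto_measure_compl_of_ae_eventually_mem S.lam hG hG_ev)) (.inr ENNReal.coe_ne_top)
  simp only [add_zero, mul_zero] at bound_lim
  refine tendsto_of_tendsto_of_tendsto_of_le_of_le tendsto_const_nhds bound_lim
    (fun _ => zero_le) fun n => (hb.muc_le _ _).trans ?_
  exact mul_le_mul_right (prod_compl_prod_le _ _ _ _) _

variable [SecondCountableTopology X]

lemma tendsto_toFM_approxFlow (hδ : Tendsto δ atTop (𝓝 0)) (hC : ∀ n, S.DoublesAt C (δ n))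
    (hε_lim : Tendsto ε atTop (𝓝 0)) [IsFiniteMeasure Q] (hQ : Q ≪ S.lam.prod S.lam) :
    Tendsto (fun n => toFM (S.approxFlow (δ n) (ε n) Q)) atTop (𝓝 (toFM Q)) := by
  have (n : ℕ) := isMarkovKernel_raise (hC n)
  refine tendsto_toFM_comp_mixture hε_lim ?_ hQ S.refFlow_absolutelyContinuous
  filter_upwards [S.ae_eventually_mem_prod_compl_lowRate hδ] with z hz
  filter_upwards [hz] with n hn
    using ((S.fixesOn_raise (δ n)).parallelComp (S.fixesOn_raise (δ n))).eq_dirac z hn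

lemma tendsto_rateI0_approx (hb : S.HasBounds p₀ p₁ R) (hδ : Tendsto δ atTop (𝓝 0))
    (hC : ∀ n, S.DoublesAt C (δ n)) (hε : ∀ n, ε n ≤ 1) (hε_lim : Tendsto ε atTop (𝓝 0))
    [IsProbabilityMeasure μ] [IsFiniteMeasure Q] (hμ : μ ≪ S.lam) (hQ : Q.fst = Q.snd)
    (hac : Q ≪ S.muc μ) :
    Tendsto (fun n => S.rateI0 (S.approxMeas (δ n) (ε n) μ) (S.approxFlow (δ n) (ε n) Q))
      atTop (𝓝 (S.rateI0 μ Q)) := by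
  have (n : ℕ) := isMarkovKernel_raise (hC n)
  have (ν : Measure X) [IsFiniteMeasure ν] := hb.isFiniteMeasure_muc ν
  have hG (n : ℕ) : MeasurableSet (S.lowRate (2 * δ n))ᶜ := (S.measurableSet_lowRate _).compl
  have hπ := S.piMeas_absolutelyContinuous
  have rateI0_approx (n : ℕ) : S.rateI0 (S.approxMeas (δ n) (ε n) μ) (S.approxFlow (δ n) (ε n) Q) =
      klDiv (S.approxFlow (δ n) (ε n) Q) (S.muc (S.approxMeas (δ n) (ε n) μ)) :=
    rateI0_eq_klDiv (fst_approxFlow_eq_snd hQ)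
  simp only [rateI0_eq_klDiv hQ, rateI0_approx]
  refine tendsto_klDiv_comp_mixture hε hε_lim (fun n => (hG n).prod (hG n))
    (fun n => (S.fixesOn_raise (δ n)).parallelComp (S.fixesOn_raise (δ n)))
    (S.ae_eventually_mem_prod_compl_lowRate hδ) hac (muc_absolutelyContinuous hμ)
    (muc_absolutelyContinuous hπ) hb.klDiv_refFlow_ne_top
    (fun n => muc_absolutelyContinuous <| raise_comp_absolutelyContinuous (hC n)
      (mixture_absolutelyContinuous hμ hπ))
    (le_max_left 1 (2 * p₁ / p₀ * (C + 1))) (fun n => ?_) (fun n => ?_)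
    (tendsto_muc_approxMeas_compl hb hδ hC hε hμ)
  · rw [← muc_mixture]
    refine (hb.raise_comp_muc_le (hC n) _).trans ?_
    gcongr
    · exact le_max_right _ _
    · rfl
  · rw [← muc_mixture]
    exact muc_restrict_prod_congr (hG n) (hG n) ((S.fixesOn_raise (δ n)).restrict_comp (hG n) _)

end Convergence

end ChainSetting

theorem M2_Idense_in_M3_general {X : Type*} [MeasurableSpace X] [TopologicalSpace X]
    [SecondCountableTopology X] [OpensMeasurableSpace X] [Nonempty X] {S : ChainSetting X}
    (hiv : S.CondIV) {p₀ p₁ R : ℝ≥0} (hb : S.HasBounds p₀ p₁ R) {μ : Measure X}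
    [IsProbabilityMeasure μ] {Q : Measure (X × X)} [IsFiniteMeasure Q] (hmem : S.MemM3 μ Q)
    (hQ : Q.fst = Q.snd) (hac : Q ≪ S.muc μ) :
    ∃ (μs : ℕ → Measure X) (Qs : ℕ → Measure (X × X)),
      (∀ n, IsProbabilityMeasure (μs n)) ∧ (∀ n, IsFiniteMeasure (Qs n)) ∧
      (∀ n, S.MemM2 (μs n) (Qs n)) ∧
      Tendsto (fun n => ((toPM (μs n), toFM (Qs n)) :
          ProbabilityMeasure X × FiniteMeasure (X × X)))
        atTop (𝓝 (toPM μ, toFM Q)) ∧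
      Tendsto (fun n => S.rateI0 (μs n) (Qs n)) atTop (𝓝 (S.rateI0 μ Q)) := by
  obtain ⟨δ, hδ_pos, hδ_lim, C, hC⟩ := hiv.exists_doublesAt
  let ε : ℕ → ℝ≥0 := fun n => ((n + 1 : ℕ) : ℝ≥0)⁻¹
  have hε_ne (n : ℕ) : ε n ≠ 0 := inv_ne_zero (Nat.cast_ne_zero.mpr n.succ_ne_zero)
  have hε_le (n : ℕ) : ε n ≤ 1 := inv_le_one_of_one_le₀ (Nat.one_le_cast.mpr n.succ_pos)
  have hε_lim : Tendsto ε atTop (𝓝 0) :=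
    tendsto_inv_atTop_nhds_zero_nat.comp (tendsto_add_atTop_nat 1)
  have (n : ℕ) := ChainSetting.isMarkovKernel_raise (hC n)
  exact ⟨fun n => S.approxMeas (δ n) (ε n) μ, fun n => S.approxFlow (δ n) (ε n) Q,
    fun n => ChainSetting.isProbabilityMeasure_approxMeas (hε_le n), fun n => inferInstance,
    fun n => ChainSetting.memM2_approx (hδ_pos n) (hC n) (hε_ne n) hmem.1 hmem.2,
    (ChainSetting.tendsto_toPM_approxMeas hδ_lim hC hε_le hε_lim hmem.1).prodMk_nhds
      (ChainSetting.tendsto_toFM_approxFlow hδ_lim hC hε_lim hmem.2),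
    ChainSetting.tendsto_rateI0_approx hb hδ_lim hC hε_le hε_lim hmem.1 hQ hac⟩

/-- **Lemma 5.6**: the set `M₂` is `I`-dense in `M₃`. -/
theorem M2_Idense_in_M3 (S : ChainSetting E) (hiv : S.CondIV)
    (μ : Measure E) (hμ : IsProbabilityMeasure μ)
    (Q : Measure (E × E)) (hQ : IsFiniteMeasure Q)
    (hmem : S.MemM3 μ Q)
    (hfin : S.rateI0 μ Q ≠ ∞) :
    ∃ (μs : ℕ → Measure E) (Qs : ℕ → Measure (E × E)),
      (∀ n, IsProbabilityMeasure (μs n)) ∧ (∀ n, IsFiniteMeasure (Qs n)) ∧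
      (∀ n, S.MemM2 (μs n) (Qs n)) ∧
      Tendsto (fun n => ((toPM (μs n), toFM (Qs n)) :
          ProbabilityMeasure E × FiniteMeasure (E × E)))
        atTop (𝓝 (toPM μ, toFM Q)) ∧
      Tendsto (fun n => S.rateI0 (μs n) (Qs n)) atTop (𝓝 (S.rateI0 μ Q)) := by
  obtain ⟨p₀, p₁, R, hb⟩ := S.exists_hasBounds
  have ⟨hQ_marginals, hac⟩ : Q.fst = Q.snd ∧ Q ≪ S.muc μ := by
    by_contra h
    exact hfin (if_neg h)
  exact M2_Idense_in_M3_general hiv hb hmem hQ_marginals hac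

end
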